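/- Let n be a natural number and let R be a transitive binary relation on the set of vectors (Fin n → ℕ) of natural numbers. Suppose R is covered by a finite family of relations R_1, …, R_m (i.e., R ⊆ R_1 ∪ … ∪ R_m), and for each j ∈ {1,…,m} there exist nonnegative rational coefficients a^j : Fin n → ℚ such that whenever R_j relates y to x, Σ_i a^j_i·y_i < Σ_i a^j_i·x_i. Then there is no infinite sequence x₀, x₁, x₂, … with R xₖ₊₁ xₖ for all k; equivalently, R is well-founded. -/

import Mathlib

/-!
A descending sequence of a transitive relation `R` satisfies `R (x q) (x p)` for all `p < q`, not
only for consecutive indices. By Dickson's lemma some `p < q` has `x p ≤ x q` componentwise, and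
then no linear combination with nonnegative coefficients can be smaller at `x q` than at `x p`.
Dickson's lemma takes the place of the infinite Ramsey theorem, which would instead extract an
infinite chain inside a single covering relation.
-/

theorem wellFounded_of_wellQuasiOrdered_of_forall_not {α : Type*} {r R : α → α → Prop}
    [IsTrans α R] (hr : WellQuasiOrdered r) (hR : ∀ y x, R y x → ¬ r x y) : WellFounded R := by
  refine wellFounded_iff_isEmpty_descending_chain.mpr ⟨fun ⟨x, hx⟩ ↦ ?_⟩
  obtain ⟨p, q, hpq, hle⟩ := hr x
  have hdesc : R (x q) (x p) := Nat.rel_of_forall_rel_succ_of_lt (Function.swap R) hx hpq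
  exact hR _ _ hdesc hle

theorem wellFounded_of_forall_exists_monotone_lt {α β : Type*} [Preorder α]
    [WellQuasiOrderedLE α] [Preorder β] {R : α → α → Prop} [IsTrans α R]
    (hR : ∀ y x, R y x → ∃ f : α → β, Monotone f ∧ f y < f x) : WellFounded R := by
  refine wellFounded_of_wellQuasiOrdered_of_forall_not wellQuasiOrdered_le fun y x hyx hle ↦ ?_
  obtain ⟨f, hf, hlt⟩ := hR y x hyx
  exact (hf hle).not_gt hlt

section LinearRanking

variable {σ K : Type*} [Fintype σ] [Semiring K] [PartialOrder K] [IsOrderedRing K]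

theorem monotone_sum_mul_natCast {a : σ → K} (ha : ∀ i, 0 ≤ a i) :
    Monotone fun x : σ → ℕ ↦ ∑ i, a i * (x i : K) := fun _ _ hxy ↦
  Finset.sum_le_sum fun i _ ↦ mul_le_mul_of_nonneg_left (Nat.mono_cast (hxy i)) (ha i)

theorem covered_linear_rankings_wellFounded_general {ι : Type*}
    {R : (σ → ℕ) → (σ → ℕ) → Prop} [IsTrans (σ → ℕ) R]
    {Rj : ι → (σ → ℕ) → (σ → ℕ) → Prop} (hcover : ∀ y x, R y x → ∃ j, Rj j y x)
    {a : ι → σ → K} (ha : ∀ j i, 0 ≤ a j i)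
    (hdec : ∀ j x y, Rj j y x → ∑ i, a j i * (y i : K) < ∑ i, a j i * (x i : K)) :
    (¬ ∃ x : ℕ → σ → ℕ, ∀ k, R (x (k + 1)) (x k)) ∧ WellFounded R := by
  have hwf : WellFounded R := wellFounded_of_forall_exists_monotone_lt <| by
    intro y x hyx
    obtain ⟨j, hj⟩ := hcover y x hyx
    exact ⟨_, monotone_sum_mul_natCast (ha j), hdec j x y hj⟩
  exact ⟨fun ⟨x, hx⟩ ↦ (wellFounded_iff_isEmpty_descending_chain.mp hwf).false ⟨x, hx⟩, hwf⟩

end LinearRanking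

/-- If a transitive relation `R` on natural-number size vectors is covered by
finitely many relations `R_1, …, R_m`, each of which strictly decreases some
fixed nonnegative rational linear combination of the sizes, then there is no
infinite `R`-descending sequence; equivalently, `R` is well-founded. -/
theorem covered_linear_rankings_wellFounded
    (n m : ℕ) (R : (Fin n → ℕ) → (Fin n → ℕ) → Prop)
    (htrans : Transitive R)
    (Rj : Fin m → (Fin n → ℕ) → (Fin n → ℕ) → Prop)
    (hcover : ∀ y x : Fin n → ℕ, R y x → ∃ j : Fin m, Rj j y x)
    (a : Fin m → Fin n → ℚ) (ha : ∀ j i, 0 ≤ a j i)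
    (hdec : ∀ j : Fin m, ∀ x y : Fin n → ℕ, Rj j y x →
      (∑ i, a j i * (y i : ℚ)) < ∑ i, a j i * (x i : ℚ)) :
    (¬ ∃ x : ℕ → (Fin n → ℕ), ∀ k, R (x (k + 1)) (x k)) ∧ WellFounded R :=
  have : IsTrans (Fin n → ℕ) R := ⟨fun _ _ _ hxy hyz ↦ htrans hxy hyz⟩
  covered_linear_rankings_wellFounded_general hcover ha hdec
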